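/- arXiv:2107.10999 — 5 statements merged into one kernel-verified Lean document; each statement's English description precedes it below -/
import Mathlib

section
/- Let S be a sharp fs monoid, realized as a finitely generated saturated submonoid of ℤ^d with S ∩ (−S) = {0}, and let S' be a face of S. Then there exists an additive monoid homomorphism p : S → ℚ^d whose image is contained in the rational cone S'_{ℚ≥0} and whose restriction to S' is the inclusion map, i.e. p(x) = x for all x ∈ S'. -/
/-!
The retraction is a perturbed linear projection. Let `V = ℚ^d`, let `C` be the rational cone of
the face `S'`, and let `W ⊆ V` be its linear span. Since `S` is finitely generated, `S'` is
generated by those generators of `S` that lie in it; let `w₀` be their sum.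

* The vector `w₀` is an order unit for `W`: for every `w ∈ W` some `N • w₀ ± w` lie in `C`
  (`exists_smul_add_mem_cone`).
* There is a linear functional `ℓ` on `V` that vanishes on `W` and is positive on each generator
  of `S` outside `S'`. This is Gordan's theorem of the alternative, relative to `W` (`gordan`).
  Its hypothesis holds because a nonnegative combination of these generators that lies in `W`
  becomes, after adding an element of the cone of `S`, a multiple of `w₀`, hence an element of
  `C`; and `C` is a face of the cone of `S` (`mem_cone_of_add_mem`).

Let `p₀ : V → W` be any linear projection. Then `p x = p₀ x + N ℓ(x) w₀` is the identity on `W`,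
and for `N` large it sends every generator of `S` into `C`.
-/

/-- **Gordan's theorem** relative to a subspace `W`: if no nontrivial nonnegative combination of
the vectors `b i`, `i ∈ s`, lies in `W`, then some linear functional vanishes on `W` and is
positive on all of them. The induction adds a vector `b a` at a time. Either the hypothesis still
holds for the other vectors relative to `W + ⟨b a⟩`, or `b a` is, modulo `W`, a positive multiple
of a nonnegative combination of them. -/
theorem gordan {ι V : Type*} [AddCommGroup V] [Module ℚ V] (b : ι → V) (s : Finset ι) :
    ∀ W : Submodule ℚ V,
      (∀ c : ι → ℚ, (∀ i ∈ s, 0 ≤ c i) → ∑ i ∈ s, c i • b i ∈ W → ∀ i ∈ s, c i = 0) →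
      ∃ l : V →ₗ[ℚ] ℚ, (∀ w ∈ W, l w = 0) ∧ ∀ i ∈ s, 0 < l (b i) := by
  classical
  induction s using Finset.induction_on with
  | empty => exact fun W _ => ⟨0, by simp, by simp⟩
  | insert a s ha ih =>
    intro W h
    by_cases h1 : ∀ c : ι → ℚ, (∀ i ∈ s, 0 ≤ c i) →
        ∑ i ∈ s, c i • b i ∈ W ⊔ Submodule.span ℚ {b a} → ∀ i ∈ s, c i = 0
    · obtain ⟨l, hl, hpos⟩ := ih _ h1
      have haW : b a ∉ W := by
        intro hmem
        have := h (fun i => if i = a then 1 else 0) (by intros; split_ifs <;> simp)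
          (by simpa using hmem) a (by simp)
        simp at this
      obtain ⟨f, hfa, hf⟩ := Submodule.exists_le_ker_of_notMem haW
      -- `g` is `f` rescaled so that `g (b a) = 1`; a large multiple of `l` dominates it on `s`.
      set g : V →ₗ[ℚ] ℚ := (f (b a))⁻¹ • f with hg
      have hga : g (b a) = 1 := by simp [hg, hfa]
      have hgW : ∀ w ∈ W, g w = 0 := fun w hw => by
        have : f w = 0 := by simpa using hf hw
        simp [hg, this]
      set N : ℚ := ∑ i ∈ s, (|g (b i)| + 1) / l (b i) with hN
      refine ⟨N • l + g, fun w hw => ?_, fun i hi => ?_⟩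
      · simp [hl w (Submodule.mem_sup_left hw), hgW w hw]
      · rcases Finset.mem_insert.1 hi with rfl | hi
        · have : l (b i) = 0 :=
            hl _ (Submodule.mem_sup_right (Submodule.mem_span_singleton_self _))
          simp [this, hga]
        · have hle : (|g (b i)| + 1) / l (b i) ≤ N :=
            Finset.single_le_sum (f := fun i => (|g (b i)| + 1) / l (b i))
              (fun j hj => div_nonneg (by positivity) (hpos j hj).le) hi
          rw [div_le_iff₀ (hpos i hi)] at hle
          have := neg_abs_le (g (b i))
          simp only [LinearMap.add_apply, LinearMap.smul_apply, smul_eq_mul]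
          linarith
    · push Not at h1
      obtain ⟨c, hc, hmem, j, hj, hcj⟩ := h1
      obtain ⟨w, hw, z, hz, hwz⟩ := Submodule.mem_sup.1 hmem
      obtain ⟨t, rfl⟩ := Submodule.mem_span_singleton.1 hz
      have ne : ∀ i ∈ s, i ≠ a := fun i hi h => ha (h ▸ hi)
      have ht : 0 < t := by
        by_contra! ht
        apply hcj
        have := h (fun i => if i = a then -t else c i) ?_ ?_ j (Finset.mem_insert_of_mem hj)
        · simpa [ne j hj] using this
        · intro i hi
          rcases Finset.mem_insert.1 hi with rfl | hi
          · simpa using ht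
          · simpa [ne i hi] using hc i hi
        · rw [Finset.sum_insert ha, Finset.sum_congr rfl (g := fun i => c i • b i)
            (fun i hi => by simp [ne i hi]), ← hwz]
          simpa using hw
      obtain ⟨l, hl, hpos⟩ := ih W (by
        intro e he hmem i hi
        have := h (fun i => if i = a then 0 else e i) ?_ ?_ i (Finset.mem_insert_of_mem hi)
        · simpa [ne i hi] using this
        · intro i hi
          rcases Finset.mem_insert.1 hi with rfl | hi
          · simp
          · simpa [ne i hi] using he i hi
        · rw [Finset.sum_insert ha, Finset.sum_congr rfl (g := fun i => e i • b i)
            (fun i hi => by simp [ne i hi])]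
          simpa using hmem)
      refine ⟨l, hl, fun i hi => ?_⟩
      rcases Finset.mem_insert.1 hi with rfl | hi
      · have h2 := congrArg l hwz
        simp only [map_add, map_smul, map_sum, hl w hw, smul_eq_mul, zero_add] at h2
        have : 0 < ∑ k ∈ s, c k * l (b k) :=
          Finset.sum_pos' (fun k hk => mul_nonneg (hc k hk) (hpos k hk).le)
            ⟨j, hj, mul_pos (lt_of_le_of_ne (hc j hj) (Ne.symm hcj)) (hpos j hj)⟩
        rw [← h2] at this
        exact (mul_pos_iff_of_pos_left ht).1 this
      · exact hpos i hi

/-- The inclusion `ℤ^d → ℚ^d`. -/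
def toRat (d : ℕ) : (Fin d → ℤ) →+ (Fin d → ℚ) where
  toFun x := fun i => (x i : ℚ)
  map_zero' := by ext; simp
  map_add' x y := by ext; simp

theorem toRat_injective (d : ℕ) : Function.Injective (toRat d) := fun x y h => by
  ext i
  have := congrFun h i
  simpa [toRat] using this

/-- The rational cone of a submonoid `T` of `ℤ^d`, encoded as the set of vectors with a positive
integral multiple in `T`. -/
def ratCone {d : ℕ} (T : AddSubmonoid (Fin d → ℤ)) : AddSubmonoid (Fin d → ℚ) where
  carrier := {x | ∃ M : ℕ, 0 < M ∧ ∃ s ∈ T, M • x = toRat d s}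
  zero_mem' := ⟨1, one_pos, 0, T.zero_mem, by simp⟩
  add_mem' := by
    rintro x y ⟨M, hM, s, hs, hx⟩ ⟨L, hL, t, ht, hy⟩
    refine ⟨M * L, Nat.mul_pos hM hL, L • s + M • t,
      T.add_mem (T.nsmul_mem hs _) (T.nsmul_mem ht _), ?_⟩
    rw [map_add, map_nsmul, map_nsmul, ← hx, ← hy, smul_add, mul_comm M L, mul_smul,
      mul_comm L M, mul_smul]

theorem toRat_mem_ratCone {d : ℕ} {T : AddSubmonoid (Fin d → ℤ)} {x : Fin d → ℤ} (hx : x ∈ T) :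
    toRat d x ∈ ratCone T := ⟨1, one_pos, x, hx, by simp⟩

theorem smul_mem_ratCone {d : ℕ} {T : AddSubmonoid (Fin d → ℤ)} {x : Fin d → ℚ}
    (hx : x ∈ ratCone T) {q : ℚ} (hq : 0 ≤ q) : q • x ∈ ratCone T := by
  obtain ⟨M, hM, s, hs, hx⟩ := hx
  lift q to ℚ≥0 using hq
  refine ⟨q.den * M, Nat.mul_pos q.den_pos hM, q.num • s, T.nsmul_mem hs _, ?_⟩
  rw [map_nsmul, ← hx]
  simp only [← Nat.cast_smul_eq_nsmul ℚ, smul_smul]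
  congr 1
  have : (q.den : ℚ) * q = q.num := by exact_mod_cast NNRat.den_mul_eq_num q
  push_cast
  rw [← this]
  ring

/-- The rational cone of a face is a face of the rational cone. -/
theorem mem_cone_of_add_mem {d : ℕ} {S S' : AddSubmonoid (Fin d → ℤ)}
    (hFace : ∀ x ∈ S, ∀ y ∈ S, x + y ∈ S' → x ∈ S' ∧ y ∈ S') {x y : Fin d → ℚ}
    (hx : x ∈ ratCone S) (hy : y ∈ ratCone S) (hxy : x + y ∈ ratCone S') : x ∈ ratCone S' := by
  obtain ⟨M, hM, s, hs, hx⟩ := hx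
  obtain ⟨L, hL, t, ht, hy⟩ := hy
  obtain ⟨K, hK, u, hu, hxy⟩ := hxy
  have h : (K * L) • s + (K * M) • t = (M * L) • u := by
    apply toRat_injective
    rw [map_add, map_nsmul, map_nsmul, map_nsmul, ← hx, ← hy, ← hxy]
    simp only [smul_smul, smul_add]
    congr 2 <;> ring
  have h2 := (hFace _ (S.nsmul_mem hs (K * L)) _ (S.nsmul_mem ht (K * M))
    (h ▸ S'.nsmul_mem hu _)).1
  refine ⟨K * L * M, by positivity, _, h2, ?_⟩
  rw [map_nsmul, ← hx, smul_smul]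

theorem mem_face_of_toRat_mem {d : ℕ} {S S' : AddSubmonoid (Fin d → ℤ)}
    (hFace : ∀ x ∈ S, ∀ y ∈ S, x + y ∈ S' → x ∈ S' ∧ y ∈ S') {x : Fin d → ℤ}
    (hx : x ∈ S) (h : toRat d x ∈ ratCone S') : x ∈ S' := by
  obtain ⟨M, hM, s, hs, h⟩ := h
  rw [← map_nsmul] at h
  have := toRat_injective d h
  obtain ⟨k, rfl⟩ : ∃ k, M = k + 1 := ⟨M - 1, by omega⟩
  refine (hFace x hx (k • x) (S.nsmul_mem hx _) ?_).1
  rw [← succ_nsmul', this]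
  exact hs

/-- The sum of a finite subset `A` of `T` is an order unit, for the order defined by the cone of
`T`, on the linear span of `A`. The statement is symmetric in the sign so that it is stable under
multiplication by negative scalars. -/
theorem exists_smul_add_mem_cone {d : ℕ} {T : AddSubmonoid (Fin d → ℤ)}
    (A : Finset (Fin d → ℤ)) (hA : ∀ a ∈ A, a ∈ T) {w : Fin d → ℚ}
    (hw : w ∈ Submodule.span ℚ (toRat d '' (A : Set (Fin d → ℤ)))) :
    ∃ N : ℚ, 0 ≤ N ∧ N • toRat d (∑ a ∈ A, a) + w ∈ ratCone T ∧
      N • toRat d (∑ a ∈ A, a) - w ∈ ratCone T := by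
  classical
  induction hw using Submodule.span_induction with
  | mem x hx =>
    obtain ⟨a, ha, rfl⟩ := hx
    have ha : a ∈ A := ha
    refine ⟨1, zero_le_one, ?_, ?_⟩
    · rw [one_smul, ← map_add]
      exact toRat_mem_ratCone (T.add_mem (T.sum_mem hA) (hA a ha))
    · rw [one_smul, ← Finset.add_sum_erase A (fun a => a) ha, map_add, add_sub_cancel_left]
      exact toRat_mem_ratCone (T.sum_mem fun x hx => hA x (Finset.mem_of_mem_erase hx))
  | zero => exact ⟨0, le_rfl, by simp, by simp⟩
  | add x y _ _ hx hy =>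
    obtain ⟨N, hN, h1, h2⟩ := hx
    obtain ⟨M, hM, h3, h4⟩ := hy
    refine ⟨N + M, add_nonneg hN hM, ?_, ?_⟩
    · convert add_mem h1 h3 using 1
      module
    · convert add_mem h2 h4 using 1
      module
  | smul q x _ hx =>
    obtain ⟨N, hN, h1, h2⟩ := hx
    refine ⟨|q| * N, by positivity, ?_⟩
    rcases le_total 0 q with hq | hq
    · rw [abs_of_nonneg hq]
      constructor
      · convert smul_mem_ratCone h1 hq using 1
        module
      · convert smul_mem_ratCone h2 hq using 1
        module
    · rw [abs_of_nonpos hq]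
      constructor
      · convert smul_mem_ratCone h2 (neg_nonneg.2 hq) using 1
        module
      · convert smul_mem_ratCone h1 (neg_nonneg.2 hq) using 1
        module

/-- For a sharp fs monoid `S ⊆ ℤ^d` and a face `S'` of `S`, there exists an
additive monoid homomorphism `p : S → ℚ^d` whose image is contained in the rational cone
`S'_{ℚ≥0}` and whose restriction to `S'` is the inclusion. -/
theorem face_retraction_exists
    (d : ℕ) (S : AddSubmonoid (Fin d → ℤ))
    (hFG : S.FG)
    (hSat : ∀ (x : Fin d → ℤ) (n : ℕ), 1 ≤ n → n • x ∈ S → x ∈ S)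
    (hSharp : ∀ x ∈ S, -x ∈ S → x = 0)
    (S' : AddSubmonoid (Fin d → ℤ)) (hS'le : S' ≤ S)
    (hFace : ∀ x ∈ S, ∀ y ∈ S, x + y ∈ S' → x ∈ S' ∧ y ∈ S') :
    ∃ p : ↥S →+ (Fin d → ℚ),
      (∀ x : ↥S, ∃ (m : ℕ) (q : Fin m → ℚ) (v : Fin m → (Fin d → ℤ)),
        (∀ k, 0 ≤ q k) ∧ (∀ k, v k ∈ S') ∧
        p x = ∑ k, q k • (fun i => ((v k i : ℚ)))) ∧
      (∀ x : ↥S, (x : Fin d → ℤ) ∈ S' →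
        p x = fun i => (((x : Fin d → ℤ) i : ℚ))) := by
  classical
  obtain ⟨G, hG⟩ := hFG
  have hGS : ∀ g ∈ G, g ∈ S := fun g hg => hG ▸ AddSubmonoid.subset_closure hg
  set A := G.filter (· ∈ S') with hAdef
  set B := G.filter (· ∉ S') with hBdef
  have hA : ∀ a ∈ A, a ∈ S' := fun a ha => (Finset.mem_filter.1 ha).2
  have hBG : ∀ b ∈ B, b ∈ S := fun b hb => hGS b (Finset.mem_filter.1 hb).1
  set W := Submodule.span ℚ (toRat d '' (A : Set (Fin d → ℤ))) with hW
  set w₀ := toRat d (∑ a ∈ A, a) with hw₀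
  have hw₀C : w₀ ∈ ratCone S' := toRat_mem_ratCone (S'.sum_mem hA)
  have hle : ratCone S' ≤ ratCone S := fun x ⟨M, hM, s, hs, h⟩ => ⟨M, hM, s, hS'le hs, h⟩
  have hS'W : ∀ x ∈ S, x ∈ S' → toRat d x ∈ W := by
    intro x hx
    rw [← hG] at hx
    induction hx using AddSubmonoid.closure_induction with
    | mem x hx =>
      exact fun h => Submodule.subset_span ⟨x, Finset.mem_filter.2 ⟨hx, h⟩, rfl⟩
    | zero => intro; simp
    | add x y hx hy ihx ihy =>
      intro h
      rw [hG] at hx hy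
      obtain ⟨h1, h2⟩ := hFace x hx y hy h
      rw [map_add]
      exact W.add_mem (ihx h1) (ihy h2)
  obtain ⟨l, hlW, hlB⟩ := gordan (toRat d) B W (by
    intro c hc hmem b hb
    by_contra hcb
    obtain ⟨N, hN, -, h2⟩ := exists_smul_add_mem_cone A hA hmem
    have hterm : ∀ i ∈ B, c i • toRat d i ∈ ratCone S := fun i hi =>
      smul_mem_ratCone (toRat_mem_ratCone (hBG i hi)) (hc i hi)
    have hsum : ∑ i ∈ B, c i • toRat d i ∈ ratCone S' :=
      mem_cone_of_add_mem hFace (sum_mem hterm) (hle h2)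
        (by rw [add_sub_cancel]; exact smul_mem_ratCone hw₀C hN)
    rw [← Finset.add_sum_erase B _ hb] at hsum
    have h3 := mem_cone_of_add_mem hFace (hterm b hb)
      (sum_mem fun i hi => hterm i (Finset.mem_of_mem_erase hi)) hsum
    have h4 := smul_mem_ratCone h3 (inv_nonneg.2 (hc b hb))
    rw [inv_smul_smul₀ hcb] at h4
    exact (Finset.mem_filter.1 hb).2 (mem_face_of_toRat_mem hFace (hBG b hb) h4))
  obtain ⟨p₀, hp₀⟩ := LinearMap.exists_leftInverse_of_injective W.subtype W.ker_subtype
  have hp₀W : ∀ w (hw : w ∈ W), (p₀ w : Fin d → ℚ) = w := fun w hw =>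
    congrArg Subtype.val (LinearMap.congr_fun hp₀ ⟨w, hw⟩)
  choose n hn0 hn _ using fun x : Fin d → ℤ =>
    exists_smul_add_mem_cone A hA (p₀ (toRat d x)).2
  -- This `N` satisfies `n b ≤ N * l b` for every `b ∈ B`.
  set N : ℚ := ∑ b ∈ B, n b / l (toRat d b) with hN
  set P : (Fin d → ℚ) →ₗ[ℚ] (Fin d → ℚ) :=
    W.subtype ∘ₗ p₀ + (N • l).smulRight w₀ with hP
  have hPapp : ∀ x, P x = (p₀ x : Fin d → ℚ) + (N * l x) • w₀ := fun x => by simp [hP]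
  have hPW : ∀ w ∈ W, P w = w := fun w hw => by simp [hPapp, hp₀W w hw, hlW w hw]
  have hPC : ∀ x ∈ S, P (toRat d x) ∈ ratCone S' := by
    intro x hx
    rw [← hG] at hx
    induction hx using AddSubmonoid.closure_induction with
    | mem x hx =>
      by_cases hxS : x ∈ S'
      · rw [hPW _ (hS'W x (hS'le hxS) hxS)]
        exact toRat_mem_ratCone hxS
      · have hxB : x ∈ B := Finset.mem_filter.2 ⟨hx, hxS⟩
        have h1 : n x / l (toRat d x) ≤ N :=
          Finset.single_le_sum (f := fun b => n b / l (toRat d b))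
            (fun b hb => div_nonneg (hn0 b) (hlB b hb).le) hxB
        rw [div_le_iff₀ (hlB x hxB)] at h1
        rw [hPapp]
        convert add_mem (hn x) (smul_mem_ratCone hw₀C (sub_nonneg.2 h1)) using 1
        module
    | zero => simp
    | add x y _ _ ihx ihy =>
      rw [map_add, map_add]
      exact add_mem ihx ihy
  refine ⟨(P.toAddMonoidHom.comp (toRat d)).comp S.subtype, fun x => ?_, fun x hx => ?_⟩
  · obtain ⟨M, hM, s, hs, h⟩ := hPC x x.2
    refine ⟨1, fun _ => (M : ℚ)⁻¹, fun _ => s, fun _ => by positivity, fun _ => hs, ?_⟩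
    have hM' : (M : ℚ) ≠ 0 := by positivity
    change P (toRat d x) = ∑ _k : Fin 1, (M : ℚ)⁻¹ • toRat d s
    rw [← h, ← Nat.cast_smul_eq_nsmul ℚ, inv_smul_smul₀ hM']
    simp
  · exact hPW _ (hS'W x x.2 hx)
end

section
/- Let S be a sharp fs monoid, realized as a finitely generated saturated submonoid of ℤ^d with S ∩ (−S) = {0}. Then there exists an additive monoid homomorphism h : S → ℝ with h(x) ≥ 0 for all x ∈ S and with trivial kernel, i.e. h(x) = 0 implies x = 0 (in other words, the set H of homomorphisms from S to the additive monoid ℝ_{≥0} with trivial kernel is nonempty). -/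
/-!
A finitely generated sharp submonoid `S` of `ℤ^d` has an integer linear functional which is
positive on finitely many prescribed nonzero elements of `S`; applied to the nonzero generators,
it is positive on all of `S \ {0}`, and its restriction to `S` is the required homomorphism.

The functional (`exists_pos_on_family`) is found by induction on the number of elements, for `S`
fixed. Given `t` and `v₁, …, vₙ` in `S \ {0}`, let `f` be positive on all `vᵢ`.

* If `f t > 0`, take `f`.
* If `f t = 0`, choose `g` with `g t > 0`; then `N f + g` works for `N` large
  (`exists_pos_of_nonneg`).
* If `f t < 0`, the elements `wᵢ = (-f t) vᵢ + (f vᵢ) t` are again in `S`, and they are nonzero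
  because `S` is sharp. A functional `g` positive on all `wᵢ` yields `h = (-f t) g + (g t) f`,
  for which `h t = 0` and `h vᵢ = g wᵢ > 0`, reducing to the second case.

Sharpness and torsion-freeness of `ℤ^d` suffice for this.
-/

/-- A functional positive on the family `v` and vanishing at `t ≠ 0` can be perturbed to be
positive at `t` too. -/
lemma exists_pos_of_nonneg {d n : ℕ} (t : Fin d → ℤ) (ht : t ≠ 0) (v : Fin n → Fin d → ℤ)
    (f : (Fin d → ℤ) →+ ℤ) (hf : ∀ i, 0 < f (v i)) (hft : f t = 0) :
    ∃ g : (Fin d → ℤ) →+ ℤ, 0 < g t ∧ ∀ i, 0 < g (v i) := by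
  obtain ⟨j, hj⟩ := Function.ne_iff.mp ht
  -- `t j` times the `j`-th coordinate functional takes the value `(t j)² > 0` at `t`.
  let g : (Fin d → ℤ) →+ ℤ := t j • Pi.evalAddMonoidHom (fun _ => ℤ) j
  have hgt : 0 < g t := by
    change 0 < t j * t j
    exact mul_self_pos.mpr hj
  refine ⟨(1 + ∑ i, |g (v i)|) • f + g, by simpa [hft] using hgt, fun i => ?_⟩
  have h1 : |g (v i)| ≤ ∑ i, |g (v i)| :=
    Finset.single_le_sum (f := fun i => |g (v i)|) (fun _ _ => abs_nonneg _) (Finset.mem_univ i)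
  have h2 := neg_abs_le (g (v i))
  have h3 := abs_nonneg (g (v i))
  have h4 := hf i
  simp only [AddMonoidHom.add_apply, AddMonoidHom.smul_apply, smul_eq_mul]
  nlinarith

lemma zsmul_mem_of_nonneg {d : ℕ} (S : AddSubmonoid (Fin d → ℤ)) {a : ℤ} (ha : 0 ≤ a)
    {x : Fin d → ℤ} (hx : x ∈ S) : a • x ∈ S := by
  lift a to ℕ using ha
  simpa using S.nsmul_mem hx a

lemma exists_pos_on_family {d : ℕ} (S : AddSubmonoid (Fin d → ℤ))
    (hSharp : ∀ x ∈ S, -x ∈ S → x = 0) (n : ℕ) :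
    ∀ v : Fin n → Fin d → ℤ, (∀ i, v i ∈ S) → (∀ i, v i ≠ 0) →
      ∃ f : (Fin d → ℤ) →+ ℤ, ∀ i, 0 < f (v i) := by
  induction n with
  | zero => exact fun _ _ _ => ⟨0, fun i => i.elim0⟩
  | succ n ih =>
    intro u huS hu0
    let t := u 0
    let v : Fin n → Fin d → ℤ := fun i => u i.succ
    suffices H : ∃ g : (Fin d → ℤ) →+ ℤ, 0 < g t ∧ ∀ i, 0 < g (v i) by
      obtain ⟨g, hgt, hgv⟩ := H
      exact ⟨g, Fin.cases hgt hgv⟩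
    obtain ⟨f, hf⟩ := ih v (fun i => huS _) (fun i => hu0 _)
    rcases lt_trichotomy (f t) 0 with hft | hft | hft
    · obtain ⟨g, hg⟩ := ih (fun i => (-f t) • v i + f (v i) • t)
        (fun i => S.add_mem (zsmul_mem_of_nonneg S (by lia) (huS _))
          (zsmul_mem_of_nonneg S (hf i).le (huS _)))
        (fun i h => by
          have hz : (-f t) • v i = 0 := by
            apply hSharp _ (zsmul_mem_of_nonneg S (by lia) (huS _))
            rw [neg_eq_of_add_eq_zero_right h]
            exact zsmul_mem_of_nonneg S (hf i).le (huS _)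
          rcases smul_eq_zero.mp hz with h0 | h0
          · lia
          · exact hu0 _ h0)
      refine exists_pos_of_nonneg t (hu0 0) v ((-f t) • g + g t • f) (fun i => ?_) ?_
      · have := hg i
        simp only [map_add, map_zsmul, AddMonoidHom.add_apply, AddMonoidHom.smul_apply,
          smul_eq_mul] at this ⊢
        linarith
      · simp only [AddMonoidHom.add_apply, AddMonoidHom.smul_apply, smul_eq_mul]
        ring
    · exact exists_pos_of_nonneg t (hu0 0) v f hf hft
    · exact ⟨f, hft, hf⟩

/-- A sharp fs monoid `S ⊆ ℤ^d` admits an additive monoid homomorphism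
`h : S → ℝ` with nonnegative values and trivial kernel. -/
theorem exists_positive_hom
    (d : ℕ) (S : AddSubmonoid (Fin d → ℤ))
    (hFG : S.FG)
    (hSat : ∀ (x : Fin d → ℤ) (n : ℕ), 1 ≤ n → n • x ∈ S → x ∈ S)
    (hSharp : ∀ x ∈ S, -x ∈ S → x = 0) :
    ∃ h : ↥S →+ ℝ, (∀ x : ↥S, 0 ≤ h x) ∧ (∀ x : ↥S, h x = 0 → x = 0) := by
  obtain ⟨T, hT⟩ := hFG
  let T' := T.filter (· ≠ 0)
  have hT' (i) : (T'.equivFin.symm i : Fin d → ℤ) ∈ T ∧ (T'.equivFin.symm i : Fin d → ℤ) ≠ 0 :=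
    Finset.mem_filter.mp (T'.equivFin.symm i).2
  obtain ⟨f, hf⟩ := exists_pos_on_family S hSharp _ (fun i => (T'.equivFin.symm i : Fin d → ℤ))
    (fun i => hT ▸ AddSubmonoid.subset_closure (hT' i).1) (fun i => (hT' i).2)
  have key : ∀ x ∈ S, x = 0 ∨ 0 < f x := by
    intro x hx
    rw [← hT] at hx
    induction hx using AddSubmonoid.closure_induction with
    | mem x hx =>
      by_cases h0 : x = 0
      · exact Or.inl h0
      · have := hf (T'.equivFin ⟨x, Finset.mem_filter.mpr ⟨hx, h0⟩⟩)
        rw [Equiv.symm_apply_apply] at this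
        exact Or.inr this
    | zero => exact Or.inl rfl
    | add x y _ _ hx hy =>
      rcases hx with rfl | hx
      · simpa using hy
      · rcases hy with rfl | hy
        · simpa using Or.inr hx
        · exact Or.inr (by rw [map_add]; exact add_pos hx hy)
  refine ⟨((Int.castAddHom ℝ).comp f).comp S.subtype, fun x => ?_, fun x hx => ?_⟩
  · change (0 : ℝ) ≤ (f x : ℤ)
    rcases key x x.2 with h | h
    · simp [h]
    · exact_mod_cast h.le
  · change ((f x : ℤ) : ℝ) = 0 at hx
    rcases key x x.2 with h | h
    · exact Subtype.ext h
    · exact absurd (Int.cast_eq_zero.mp hx) h.ne'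
end

section
/- Let S be a sharp fs monoid, realized as a finitely generated saturated submonoid of ℤ^d with S ∩ (−S) = {0}. Let S = S^{(0)} ⊋ S^{(1)} ⊋ ⋯ ⊋ S^{(n)} = {0} be a strictly decreasing chain of faces of S, and for 0 ≤ i ≤ n−1 choose a_i ∈ S^{(i)} with a_i ∉ S^{(i+1)}. Let X be the set of tuples N = (N_i)_{0 ≤ i ≤ n−1}, where each N_i : S^{(i)} → ℝ is an additive monoid homomorphism with N_i(x) ≥ 0 for all x, satisfying: (i) N_i(a_i) = 1 for all 0 ≤ i ≤ n−1; (ii) for each 0 ≤ i ≤ n−1, the kernel {x ∈ S^{(i)} : N_i(x) = 0} equals S^{(j)} for some j with i < j ≤ n; (iii) for all 0 ≤ i < j ≤ n−1 and all x ∈ S^{(j)}, N_i(x) = N_i(a_j)·N_j(x). Endow X with the subspace topology inherited from the product ∏_{i=0}^{n−1}(S^{(i)} → ℝ) of function spaces with the topology of pointwise convergence. Then X is a contractible topological space. -/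
/-!
The flag yields for each `i` an additive map `ψ i : ℤ^d → ℝ` that is nonnegative on `S`, vanishes
on `S` exactly along `S^{(i+1)}`, and satisfies `ψ i (a i) = 1` (`exists_supporting_hom`; this is
where finite generation enters, through the theorem of alternatives
`exists_pos_hom_or_exists_relation`). The tuple `ψ` is a point of the space, the one with all
ratios `N_i(a_j)`, `i < j`, equal to zero.

With `N_j` fixed for `j > i`, the conditions on `N_i` are convex: `N_i` must restrict on
`S^{(i+1)}` to some nonnegative multiple of `N_{i+1}`, be positive off `S^{(i+1)}`, and take the
value `1` at `a_i`. So `N_0` is first moved to `ψ 0` along a segment, after which its restriction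
to `S^{(1)}` is zero and `N_1` becomes free to move, then `N_1` is moved to `ψ 1`, and so on.
All these moves are packaged in the single formula `(1 - c i) * N i + c i * ψ i`, where the
weight `c i` starts to grow only when all `c k`, `k < i`, have reached `1`
(`RatioCond.segment`).
-/

/-- The defining conditions for a point of the Φ-part `R(S)(Φ)` of the space of ratios:
a tuple `N = (N_i)_{0 ≤ i ≤ n-1}` of nonnegative additive maps `N_i : S^{(i)} → ℝ` such that
(i) `N_i(a_i) = 1`, (ii) the kernel of `N_i` is `S^{(j)}` for some `i < j ≤ n`, and
(iii) `N_i(x) = N_i(a_j)·N_j(x)` for `i < j ≤ n-1` and `x ∈ S^{(j)}`. -/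
def RatioCond (d n : ℕ) (F : Fin (n + 1) → AddSubmonoid (Fin d → ℤ))
    (a : Fin n → (Fin d → ℤ))
    (N : ∀ i : Fin n, ↥(F i.castSucc) → ℝ) : Prop :=
  (∀ i, N i 0 = 0) ∧
  (∀ i (x y : ↥(F i.castSucc)), N i (x + y) = N i x + N i y) ∧
  (∀ i x, 0 ≤ N i x) ∧
  (∀ i (h : a i ∈ F i.castSucc), N i ⟨a i, h⟩ = 1) ∧
  (∀ i : Fin n, ∃ j : Fin (n + 1), (i : ℕ) < (j : ℕ) ∧
    ∀ x : ↥(F i.castSucc), (N i x = 0 ↔ (x : Fin d → ℤ) ∈ F j)) ∧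
  (∀ i j : Fin n, (i : ℕ) < (j : ℕ) →
    ∀ (x : Fin d → ℤ) (hxj : x ∈ F j.castSucc) (hxi : x ∈ F i.castSucc)
      (haj : a j ∈ F i.castSucc),
      N i ⟨x, hxi⟩ = N i ⟨a j, haj⟩ * N j ⟨x, hxj⟩)

/-- Gordan's theorem of alternatives for finitely many elements of an abelian group: either some
real-valued additive map is positive on all of them, or they satisfy a nontrivial relation with
natural coefficients. Induction on the number of elements, passing to the quotient by the
subgroup generated by one of them. -/
theorem exists_pos_hom_or_exists_relation {ι : Type} (s : Finset ι) :
    ∀ (G : Type) [AddCommGroup G] (v : ι → G),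
      (∃ f : G →+ ℝ, ∀ i ∈ s, 0 < f (v i)) ∨
      ∃ n : ι → ℕ, (∃ i ∈ s, n i ≠ 0) ∧ ∑ i ∈ s, n i • v i = 0 := by
  classical
  induction s using Finset.induction_on with
  | empty => intro G _ v; exact Or.inl ⟨0, by simp⟩
  | insert w s hw ih =>
    intro G _ v
    -- A nontrivial relation on `s` together with a coefficient `m` for `w` is one on `insert w s`.
    have key : ∀ (n : ι → ℕ) (m : ℕ), ((∃ i ∈ s, n i ≠ 0) ∨ m ≠ 0) →
        ∑ i ∈ s, n i • v i + m • v w = 0 →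
        ∃ n : ι → ℕ, (∃ i ∈ insert w s, n i ≠ 0) ∧ ∑ i ∈ insert w s, n i • v i = 0 := by
      intro n m hne hsum
      have hcong : ∀ i ∈ s, Function.update n w m i = n i := fun i hi =>
        Function.update_of_ne (fun h : i = w => hw (h ▸ hi)) _ _
      refine ⟨Function.update n w m, ?_, ?_⟩
      · rcases hne with ⟨i, hi, hni⟩ | hm
        · exact ⟨i, Finset.mem_insert_of_mem hi, by rwa [hcong i hi]⟩
        · exact ⟨w, Finset.mem_insert_self _ _, by simpa using hm⟩
      · rw [Finset.sum_insert hw, Function.update_self, add_comm, ← hsum]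
        congr 1
        exact Finset.sum_congr rfl fun i hi => by rw [hcong i hi]
    rcases ih (G ⧸ AddSubgroup.zmultiples (v w)) (fun i => (v i : G ⧸ _)) with
      ⟨f, hf⟩ | ⟨n, ⟨i₀, hi₀, hn₀⟩, hsum⟩
    · by_cases htor : ∃ m : ℕ, m ≠ 0 ∧ m • v w = 0
      · obtain ⟨m, hm, hmw⟩ := htor
        exact Or.inr (key 0 m (Or.inr hm) (by simp [hmw]))
      · push Not at htor
        -- `v w` has infinite order, so divisibility of `ℝ` provides `h` with `h (v w) = 1`.
        have hinj : Function.Injective (zmultiplesHom G (v w)) := by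
          rw [injective_iff_map_eq_zero]
          intro k hk
          by_contra hk0
          refine htor k.natAbs (by simpa using hk0) ?_
          rw [zmultiplesHom_apply] at hk
          rcases Int.natAbs_eq k with h | h
          · rw [h, natCast_zsmul] at hk; exact hk
          · rw [h, neg_zsmul, natCast_zsmul, neg_eq_zero] at hk; exact hk
        obtain ⟨h, hh⟩ := (Module.Baer.of_divisible ℝ).extension_property_addMonoidHom
          (zmultiplesHom G (v w)) hinj (Int.castAddHom ℝ)
        have hw1 : h (v w) = 1 := by
          have := DFunLike.congr_fun hh 1
          simpa using this
        let p : G →+ ℝ := f.comp (QuotientAddGroup.mk' _)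
        have hpw : p (v w) = 0 := by
          have : ((v w : G) : G ⧸ AddSubgroup.zmultiples (v w)) = 0 :=
            (QuotientAddGroup.eq_zero_iff _).2 (AddSubgroup.mem_zmultiples _)
          simp [p, this]
        have hpv : ∀ i ∈ s, 0 < p (v i) := hf
        -- A large multiple of `p` dominates `h` on the remaining elements.
        obtain ⟨K, hK⟩ : ∃ K : ℕ, ∀ i ∈ s, 0 < (K : ℝ) * p (v i) + h (v i) := by
          have : ∀ i ∈ s, ∀ᶠ K : ℕ in Filter.atTop, 0 < (K : ℝ) * p (v i) + h (v i) := by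
            intro i hi
            have ht : Filter.Tendsto (fun K : ℕ => (K : ℝ) * p (v i) + h (v i))
                Filter.atTop Filter.atTop :=
              Filter.tendsto_atTop_add_const_right _ _
                (tendsto_natCast_atTop_atTop.atTop_mul_const (hpv i hi))
            exact ht.eventually_gt_atTop 0
          exact ((Filter.eventually_all_finset s).2 this).exists
        refine Or.inl ⟨K • p + h, fun i hi => ?_⟩
        rcases Finset.mem_insert.1 hi with rfl | hi
        · simp [hpw, hw1]
        · simpa using hK i hi
    · have hmem : ∑ i ∈ s, n i • v i ∈ AddSubgroup.zmultiples (v w) := by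
        rw [← QuotientAddGroup.eq_zero_iff, ← hsum]
        simp
      obtain ⟨k, hk⟩ := AddSubgroup.mem_zmultiples_iff.1 hmem
      rcases le_or_gt k 0 with hk0 | hk0
      · refine Or.inr (key n k.natAbs (Or.inl ⟨i₀, hi₀, hn₀⟩) ?_)
        rw [← hk, ← natCast_zsmul, ← add_zsmul]
        have : k + (k.natAbs : ℤ) = 0 := by omega
        rw [this, zero_zsmul]
      · -- A positive multiple of `v w` is a combination of the others, so a map that is positive
        -- on the others is positive on `v w`.
        rcases ih G v with ⟨f, hf⟩ | ⟨n', hne, hsum'⟩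
        · refine Or.inl ⟨f, fun i hi => ?_⟩
          rcases Finset.mem_insert.1 hi with rfl | hi
          · have h1 : (k : ℝ) * f (v i) = ∑ j ∈ s, (n j : ℝ) * f (v j) := by
              have := congrArg f hk
              simpa [map_zsmul, map_sum] using this
            have h2 : 0 < ∑ j ∈ s, (n j : ℝ) * f (v j) :=
              Finset.sum_pos' (fun j hj => mul_nonneg (Nat.cast_nonneg _) (hf j hj).le)
                ⟨i₀, hi₀, mul_pos (by positivity) (hf i₀ hi₀)⟩
            rw [← h1] at h2
            exact (mul_pos_iff_of_pos_left (by exact_mod_cast hk0)).1 h2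
          · exact hf i hi
        · exact Or.inr (key n' 0 (Or.inl hne) (by simpa using hsum'))

/-- Every face `T` of a finitely generated `S` is cut out by a supporting additive map: one that
is nonnegative on `S` and vanishes on `S` exactly along `T`. -/
theorem exists_supporting_hom {G : Type} [AddCommGroup G] (S T : AddSubmonoid G) (hFG : S.FG)
    (hTS : T ≤ S) (hface : ∀ x ∈ S, ∀ y ∈ S, x + y ∈ T → x ∈ T ∧ y ∈ T) :
    ∃ φ : G →+ ℝ, ∀ x ∈ S, 0 ≤ φ x ∧ (φ x = 0 ↔ x ∈ T) := by
  classical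
  obtain ⟨t, ht⟩ := hFG
  have htS : ∀ g ∈ t, g ∈ S := fun g hg => ht ▸ AddSubmonoid.subset_closure hg
  have hdiff : ∀ x ∈ AddSubgroup.closure (T : Set G), ∃ u ∈ T, x + u ∈ T := by
    intro x hx
    induction hx using AddSubgroup.closure_induction with
    | mem x hx => exact ⟨0, T.zero_mem, by simpa using hx⟩
    | zero => exact ⟨0, T.zero_mem, by simp⟩
    | add x y _ _ hx hy =>
      obtain ⟨u, hu, hxu⟩ := hx
      obtain ⟨w, hw, hyw⟩ := hy
      exact ⟨u + w, T.add_mem hu hw, by rw [add_add_add_comm]; exact T.add_mem hxu hyw⟩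
    | neg x _ hx =>
      obtain ⟨u, hu, hxu⟩ := hx
      exact ⟨x + u, hxu, by simpa using hu⟩
  rcases exists_pos_hom_or_exists_relation (t.filter (· ∉ T))
      (G ⧸ AddSubgroup.closure (T : Set G)) (fun g => (g : G ⧸ _)) with
    ⟨f, hf⟩ | ⟨n, ⟨g, hg, hng⟩, hsum⟩
  · let φ : G →+ ℝ := f.comp (QuotientAddGroup.mk' _)
    have hφT : ∀ x ∈ T, φ x = 0 := by
      intro x hx
      have : (x : G ⧸ AddSubgroup.closure (T : Set G)) = 0 :=
        (QuotientAddGroup.eq_zero_iff _).2 (AddSubgroup.subset_closure hx)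
      simp [φ, this]
    have hφ : ∀ x ∈ S, 0 ≤ φ x ∧ (φ x = 0 → x ∈ T) := by
      intro x hx
      rw [← ht] at hx
      induction hx using AddSubmonoid.closure_induction with
      | mem x hx =>
        by_cases hxT : x ∈ T
        · exact ⟨(hφT x hxT).ge, fun _ => hxT⟩
        · have : 0 < φ x := hf x (Finset.mem_filter.2 ⟨hx, hxT⟩)
          exact ⟨this.le, fun h => absurd h this.ne'⟩
      | zero => exact ⟨by simp, fun _ => T.zero_mem⟩
      | add x y _ _ hx hy =>
        rw [map_add]
        refine ⟨add_nonneg hx.1 hy.1, fun h => ?_⟩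
        rw [add_eq_zero_iff_of_nonneg hx.1 hy.1] at h
        exact T.add_mem (hx.2 h.1) (hy.2 h.2)
    exact ⟨φ, fun x hx => ⟨(hφ x hx).1, (hφ x hx).2, hφT x⟩⟩
  · -- A relation modulo the group generated by `T` would, by the face property, put the
    -- generator `g` into `T`.
    exfalso
    have hmem : ∑ i ∈ t.filter (· ∉ T), n i • i ∈ AddSubgroup.closure (T : Set G) := by
      rw [← QuotientAddGroup.eq_zero_iff, ← hsum]
      simp
    have hS : ∀ i ∈ t.filter (· ∉ T), n i • i ∈ S := fun i hi =>
      S.nsmul_mem (htS i (Finset.mem_filter.1 hi).1) _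
    obtain ⟨u, hu, hxu⟩ := hdiff _ hmem
    have hT := (hface _ (S.sum_mem hS) _ (hTS hu) hxu).1
    rw [← Finset.add_sum_erase _ _ hg] at hT
    have hgT := (hface _ (hS g hg) _
      (S.sum_mem fun i hi => hS i (Finset.mem_of_mem_erase hi)) hT).1
    obtain ⟨k, hk⟩ := Nat.exists_eq_succ_of_ne_zero hng
    have hgS := htS g (Finset.mem_filter.1 hg).1
    rw [hk, succ_nsmul] at hgT
    exact (Finset.mem_filter.1 hg).2 (hface _ (S.nsmul_mem hgS k) _ hgS hgT).2

/-- The tuple of supporting maps `ψ i` is a point of the space. -/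
theorem RatioCond.of_supporting {d n : ℕ} {F : Fin (n + 1) → AddSubmonoid (Fin d → ℤ)}
    {a : Fin n → (Fin d → ℤ)} (hanti : Antitone F) (ha : ∀ i, a i ∈ F i.castSucc)
    (ψ : Fin n → (Fin d → ℤ) →+ ℝ) (hψ0 : ∀ i, ∀ x ∈ F i.castSucc, 0 ≤ ψ i x)
    (hψk : ∀ i, ∀ x ∈ F i.castSucc, (ψ i x = 0 ↔ x ∈ F i.succ)) (hψa : ∀ i, ψ i (a i) = 1) :
    RatioCond d n F a (fun i x => ψ i x) := by
  refine ⟨fun i => by simp, fun i x y => by simp, fun i x => hψ0 i x x.2, fun i _ => hψa i,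
    fun i => ⟨i.succ, by simp, fun x => hψk i x x.2⟩, ?_⟩
  intro i j hij x hxj hxi haj
  have hle : F j.castSucc ≤ F i.succ := hanti (by
    rw [Fin.le_def]; simpa using hij)
  have h1 : ψ i x = 0 := (hψk i x hxi).2 (hle hxj)
  have h2 : ψ i (a j) = 0 := (hψk i _ haj).2 (hle (ha j))
  simp [h1, h2]

/-- Moving each `N i` towards the supporting map `ψ i` with weight `c i` stays in the space,
provided that `c j` is nonzero only when all `c i` with `i < j` are equal to `1`. -/
theorem RatioCond.segment {d n : ℕ} {F : Fin (n + 1) → AddSubmonoid (Fin d → ℤ)}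
    {a : Fin n → (Fin d → ℤ)} (hanti : Antitone F) (ha : ∀ i, a i ∈ F i.castSucc)
    (ψ : Fin n → (Fin d → ℤ) →+ ℝ) (hψ0 : ∀ i, ∀ x ∈ F i.castSucc, 0 ≤ ψ i x)
    (hψk : ∀ i, ∀ x ∈ F i.castSucc, (ψ i x = 0 ↔ x ∈ F i.succ)) (hψa : ∀ i, ψ i (a i) = 1)
    {N : ∀ i : Fin n, ↥(F i.castSucc) → ℝ} (hN : RatioCond d n F a N)
    (c : Fin n → ℝ) (hc0 : ∀ i, 0 ≤ c i) (hc1 : ∀ i, c i ≤ 1)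
    (hc : ∀ i j : Fin n, (i : ℕ) < j → c i = 1 ∨ c j = 0) :
    RatioCond d n F a (fun i x => (1 - c i) * N i x + c i * ψ i x) := by
  obtain ⟨hz, hadd, hnn, hone, hker, hrat⟩ := hN
  refine ⟨fun i => by simp [hz], fun i x y => by simp only [hadd]; push_cast; rw [map_add]; ring,
    fun i x => add_nonneg (mul_nonneg (sub_nonneg.2 (hc1 i)) (hnn i x))
      (mul_nonneg (hc0 i) (hψ0 i x x.2)),
    fun i h => by simp [hone, hψa], fun i => ?_, ?_⟩
  · rcases (hc1 i).eq_or_lt with h | h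
    · exact ⟨i.succ, by simp, fun x => by simpa [h] using hψk i x x.2⟩
    · obtain ⟨j, hij, hj⟩ := hker i
      refine ⟨j, hij, fun x => ?_⟩
      have h1 : 0 < 1 - c i := sub_pos.2 h
      rw [← hj x, add_eq_zero_iff_of_nonneg (mul_nonneg h1.le (hnn i x))
        (mul_nonneg (hc0 i) (hψ0 i x x.2)), mul_eq_zero, or_iff_right h1.ne']
      refine ⟨fun hx => hx.1, fun hx => ⟨hx, ?_⟩⟩
      have hle : F j ≤ F i.succ := hanti (by rw [Fin.le_def]; simpa using hij)
      rw [(hψk i x x.2).2 (hle ((hj x).1 hx)), mul_zero]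
  · intro i j hij x hxj hxi haj
    have hle : F j.castSucc ≤ F i.succ := hanti (by rw [Fin.le_def]; simpa using hij)
    have h1 : ψ i x = 0 := (hψk i x hxi).2 (hle hxj)
    have h2 : ψ i (a j) = 0 := (hψk i _ haj).2 (hle (ha j))
    rcases hc i j hij with h | h
    · simp [h, h1, h2]
    · simp only [h, h1, h2, hrat i j hij x hxj hxi haj]
      ring

/-- For a sharp fs monoid `S ⊆ ℤ^d` with a strictly decreasing flag of faces
`S = S^{(0)} ⊋ S^{(1)} ⊋ ⋯ ⊋ S^{(n)} = {0}` and chosen elements `a_i ∈ S^{(i)} \ S^{(i+1)}`,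
the Φ-part `R(S)(Φ)` of the space of ratios (described concretely as the space `X` of tuples
`N` satisfying `RatioCond`, with the topology of pointwise convergence) is contractible. -/
theorem ratio_part_contractible
    (d n : ℕ) (S : AddSubmonoid (Fin d → ℤ))
    (hFG : S.FG)
    (hSat : ∀ (x : Fin d → ℤ) (m : ℕ), 1 ≤ m → m • x ∈ S → x ∈ S)
    (hSharp : ∀ x ∈ S, -x ∈ S → x = 0)
    (F : Fin (n + 1) → AddSubmonoid (Fin d → ℤ))
    (hF0 : F 0 = S) (hFn : F (Fin.last n) = ⊥)
    (hFle : ∀ i, F i ≤ S)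
    (hFace : ∀ i, ∀ x ∈ S, ∀ y ∈ S, x + y ∈ F i → x ∈ F i ∧ y ∈ F i)
    (hstrict : ∀ i : Fin n, F i.succ < F i.castSucc)
    (a : Fin n → (Fin d → ℤ))
    (ha : ∀ i : Fin n, a i ∈ F i.castSucc ∧ a i ∉ F i.succ) :
    ContractibleSpace {N : ∀ i : Fin n, ↥(F i.castSucc) → ℝ // RatioCond d n F a N} := by
  have hanti : Antitone F := Fin.antitone_iff_succ_le.2 fun i => (hstrict i).le
  have ha' : ∀ i, a i ∈ F i.castSucc := fun i => (ha i).1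
  have hex : ∀ i : Fin n, ∃ ψ : (Fin d → ℤ) →+ ℝ, (∀ x ∈ F i.castSucc, 0 ≤ ψ x) ∧
      (∀ x ∈ F i.castSucc, (ψ x = 0 ↔ x ∈ F i.succ)) ∧ ψ (a i) = 1 := by
    intro i
    obtain ⟨φ, hφ⟩ := exists_supporting_hom S (F i.succ) hFG (hFle _) (hFace _)
    have haS := hφ (a i) (hFle _ (ha' i))
    have hne : φ (a i) ≠ 0 := fun h => (ha i).2 (haS.2.1 h)
    refine ⟨(AddMonoidHom.mulLeft (φ (a i))⁻¹).comp φ, fun x hx => ?_, fun x hx => ?_, ?_⟩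
    · exact mul_nonneg (inv_nonneg.2 haS.1) (hφ x (hFle _ hx)).1
    · rw [← (hφ x (hFle _ hx)).2]
      simp [hne]
    · simp [hne]
  choose ψ hψ0 hψk hψa using hex
  -- On the time interval `[i / n, (i + 1) / n]` the `i`-th weight grows linearly from `0` to `1`.
  let c : unitInterval → Fin n → ℝ := fun s i => max 0 (min 1 (n * (s : ℝ) - (i : ℕ)))
  have hcc : ∀ i, Continuous fun s => c s i := fun i => by fun_prop
  have hc : ∀ s (i j : Fin n), (i : ℕ) < j → c s i = 1 ∨ c s j = 0 := by
    intro s i j hij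
    have hij' : ((i : ℕ) : ℝ) + 1 ≤ (j : ℕ) := by exact_mod_cast hij
    rcases le_total ((i : ℕ) + 1 : ℝ) (n * (s : ℝ)) with h | h
    · left
      simp only [c]
      rw [min_eq_left (by linarith), max_eq_right zero_le_one]
    · right
      exact max_eq_left ((min_le_right _ _).trans (by linarith))
  rw [contractible_iff_id_nullhomotopic]
  refine ⟨⟨_, RatioCond.of_supporting hanti ha' ψ hψ0 hψk hψa⟩, ⟨?_⟩⟩
  exact
    { toFun := fun p => ⟨_, RatioCond.segment hanti ha' ψ hψ0 hψk hψa p.2.2 (c p.1)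
        (fun i => le_max_left _ _) (fun i => max_le zero_le_one (min_le_left _ _)) (hc p.1)⟩
      continuous_toFun := by
        refine Continuous.subtype_mk (continuous_pi fun i => continuous_pi fun x => ?_) _
        have h1 : Continuous fun p : unitInterval ×
            {N : ∀ i : Fin n, ↥(F i.castSucc) → ℝ // RatioCond d n F a N} => c p.1 i :=
          (hcc i).comp continuous_fst
        have h2 : Continuous fun p : unitInterval ×
            {N : ∀ i : Fin n, ↥(F i.castSucc) → ℝ // RatioCond d n F a N} => p.2.1 i x :=
          (continuous_apply x).comp ((continuous_apply i).comp
            (continuous_subtype_val.comp continuous_snd))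
        exact ((continuous_const.sub h1).mul h2).add (h1.mul continuous_const)
      map_zero_left := by
        intro N
        have : ∀ i, c 0 i = 0 := fun i =>
          max_eq_left ((min_le_right _ _).trans (by simp))
        apply Subtype.ext
        funext i x
        simp [this]
      map_one_left := by
        intro N
        have : ∀ i, c 1 i = 1 := fun i => by
          have hi : ((i : ℕ) : ℝ) + 1 ≤ n := by exact_mod_cast i.2
          simp only [c]
          rw [min_eq_left (by simp; linarith), max_eq_right zero_le_one]
        apply Subtype.ext
        funext i x
        simp [this] }
end

section
/- Let S be a sharp fs monoid, realized as a finitely generated saturated submonoid of ℤ^d with S ∩ (−S) = {0}. Let S = S^{(0)} ⊋ S^{(1)} ⊋ ⋯ ⊋ S^{(n)} = {0} be a strictly decreasing chain of faces of S, and for 0 ≤ i ≤ n−1 choose a_i ∈ S^{(i)} with a_i ∉ S^{(i+1)}. Let X be the space of tuples N = (N_i)_{0 ≤ i ≤ n−1} of nonnegative additive monoid homomorphisms N_i : S^{(i)} → ℝ satisfying (i) N_i(a_i) = 1, (ii) the kernel of each N_i equals S^{(j)} for some i < j ≤ n, and (iii) N_i(x) = N_i(a_j)·N_j(x) for all i <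 j ≤ n−1 and x ∈ S^{(j)}, topologized as a subspace of the product of function spaces with pointwise convergence. Let X_{>0} be the subspace of X consisting of those N with {x ∈ S : N_0(x) = 0} = {0}, and let H_1 be the space of additive monoid homomorphisms h : S → ℝ with h(x) ≥ 0 for all x, with trivial kernel, and with h(a_0) = 1, topologized by pointwise convergence. Then the map H_1 → X_{>0} sending h to the tuple whose i-th component is the restriction of h(a_i)^{−1}·h to S^{(i)} is a homeomorphism, whose inverse sends N to N_0. -/
/-- The subspace `R(S)(Φ)_{>0}` of `R(S)(Φ)`: tuples `N` satisfying `RatioCond` such that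
moreover `N_0` has trivial kernel. It carries the subspace topology of the product of
function spaces (pointwise convergence). -/
abbrev RatioPos (d n : ℕ) (hn : 0 < n) (F : Fin (n + 1) → AddSubmonoid (Fin d → ℤ))
    (a : Fin n → (Fin d → ℤ)) : Type :=
  {N : ∀ i : Fin n, ↥(F i.castSucc) → ℝ // RatioCond d n F a N ∧
    ∀ x : ↥(F (⟨0, hn⟩ : Fin n).castSucc),
      N ⟨0, hn⟩ x = 0 → (x : Fin d → ℤ) = 0}

/-- The space `H_1` of nonnegative additive monoid homomorphisms `h : S → ℝ` with trivial
kernel normalized by `h(a_0) = 1`, with the topology of pointwise convergence. -/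
abbrev NormalizedHoms (d n : ℕ) (hn : 0 < n) (S : AddSubmonoid (Fin d → ℤ))
    (a : Fin n → (Fin d → ℤ)) : Type :=
  {h : ↥S → ℝ // h 0 = 0 ∧ (∀ x y : ↥S, h (x + y) = h x + h y) ∧
    (∀ x : ↥S, 0 ≤ h x) ∧ (∀ x : ↥S, h x = 0 → x = 0) ∧
    ∀ (h0 : a ⟨0, hn⟩ ∈ S), h ⟨a ⟨0, hn⟩, h0⟩ = 1}

/-- the map `H_1 → R(S)(Φ)_{>0}`, `h ↦ (h(a_i)⁻¹·h|_{S^{(i)}})_i`, is a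
homeomorphism with inverse `N ↦ N_0`. -/
theorem normalizedHoms_homeo_ratioPos
    (d n : ℕ) (hn : 0 < n) (S : AddSubmonoid (Fin d → ℤ))
    (hFG : S.FG)
    (hSat : ∀ (x : Fin d → ℤ) (m : ℕ), 1 ≤ m → m • x ∈ S → x ∈ S)
    (hSharp : ∀ x ∈ S, -x ∈ S → x = 0)
    (F : Fin (n + 1) → AddSubmonoid (Fin d → ℤ))
    (hF0 : F 0 = S) (hFn : F (Fin.last n) = ⊥)
    (hFle : ∀ i, F i ≤ S)
    (hFace : ∀ i, ∀ x ∈ S, ∀ y ∈ S, x + y ∈ F i → x ∈ F i ∧ y ∈ F i)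
    (hstrict : ∀ i : Fin n, F i.succ < F i.castSucc)
    (a : Fin n → (Fin d → ℤ))
    (ha : ∀ i : Fin n, a i ∈ F i.castSucc ∧ a i ∉ F i.succ) :
    ∃ e : NormalizedHoms d n hn S a ≃ₜ RatioPos d n hn F a,
      (∀ (h : NormalizedHoms d n hn S a) (i : Fin n) (x : ↥(F i.castSucc))
         (hai : a i ∈ S) (hx : (x : Fin d → ℤ) ∈ S),
         (e h).1 i x = (h.1 ⟨a i, hai⟩)⁻¹ * h.1 ⟨(x : Fin d → ℤ), hx⟩) ∧
      (∀ (N : RatioPos d n hn F a) (x : ↥S)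
         (hx : (x : Fin d → ℤ) ∈ F (⟨0, hn⟩ : Fin n).castSucc),
         (e.symm N).1 x = N.1 ⟨0, hn⟩ ⟨(x : Fin d → ℤ), hx⟩) := by
  have hz : F (⟨0, hn⟩ : Fin n).castSucc = S := hF0
  have haS : ∀ i, a i ∈ S := fun i => hFle _ (ha i).1
  have ha0 : ∀ i, a i ≠ 0 := fun i h => (ha i).2 (h ▸ zero_mem _)
  have hne : ∀ (h : NormalizedHoms d n hn S a) (i : Fin n), h.1 ⟨a i, haS i⟩ ≠ 0 :=
    fun h i h0 => ha0 i (congrArg Subtype.val (h.2.2.2.2.1 _ h0))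
  have hfwd : ∀ h : NormalizedHoms d n hn S a,
      RatioCond d n F a (fun i x => (h.1 ⟨a i, haS i⟩)⁻¹ * h.1 ⟨x, hFle _ x.2⟩) ∧
      ∀ x : ↥(F (⟨0, hn⟩ : Fin n).castSucc),
        (h.1 ⟨a ⟨0, hn⟩, haS _⟩)⁻¹ * h.1 ⟨x, hFle _ x.2⟩ = 0 → (x : Fin d → ℤ) = 0 := by
    intro h
    have hker : ∀ (i : Fin n) (x : ↥(F i.castSucc)),
        (h.1 ⟨a i, haS i⟩)⁻¹ * h.1 ⟨x, hFle _ x.2⟩ = 0 ↔ (x : Fin d → ℤ) = 0 := by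
      intro i x
      rw [mul_eq_zero, or_iff_right (inv_ne_zero (hne h i))]
      refine ⟨fun hx => congrArg Subtype.val (h.2.2.2.2.1 _ hx), fun hx => ?_⟩
      rw [show (⟨x, hFle _ x.2⟩ : S) = 0 from Subtype.ext hx, h.2.1]
    refine ⟨⟨fun i => (hker i 0).2 rfl, fun i x y => ?_, fun i x => ?_, fun i _ => ?_,
      fun i => ⟨Fin.last n, i.2, fun x => ?_⟩, fun i j _ x hxj hxi haj => ?_⟩,
      fun x => (hker _ x).1⟩
    · rw [← mul_add, ← h.2.2.1]
      rfl
    · exact mul_nonneg (inv_nonneg.2 (h.2.2.2.1 _)) (h.2.2.2.1 _)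
    · exact inv_mul_cancel₀ (hne h i)
    · rw [hFn, AddSubmonoid.mem_bot]
      exact hker i x
    · have h1 := hne h i
      have h2 := hne h j
      field_simp
  have hmem : ∀ x : S, (x : Fin d → ℤ) ∈ F (⟨0, hn⟩ : Fin n).castSucc :=
    fun x => hz.symm ▸ x.2
  refine ⟨{
    toFun := fun h => ⟨fun i x => (h.1 ⟨a i, haS i⟩)⁻¹ * h.1 ⟨x, hFle _ x.2⟩, hfwd h⟩
    invFun := fun N => ⟨fun x => N.1 ⟨0, hn⟩ ⟨x, hmem x⟩,
      N.2.1.1 _, fun x y => N.2.1.2.1 _ ⟨x, hmem x⟩ ⟨y, hmem y⟩, fun x => N.2.1.2.2.1 _ _,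
      fun x hx => Subtype.ext (N.2.2 _ hx), fun _ => N.2.1.2.2.2.1 _ _⟩
    left_inv := fun h => ?_
    right_inv := fun N => ?_
    continuous_toFun := ?_
    continuous_invFun := ?_ }, fun h i x _ _ => rfl, fun N x _ => rfl⟩
  · refine Subtype.ext (funext fun x => ?_)
    change (h.1 ⟨a ⟨0, hn⟩, haS _⟩)⁻¹ * h.1 x = h.1 x
    rw [h.2.2.2.2.2, inv_one, one_mul]
  · refine Subtype.ext (funext fun i => funext fun x => ?_)
    change (N.1 ⟨0, hn⟩ ⟨a i, _⟩)⁻¹ * N.1 ⟨0, hn⟩ ⟨x, _⟩ = N.1 i x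
    have haz : a i ∈ F (⟨0, hn⟩ : Fin n).castSucc := hz.symm ▸ haS i
    have hN : N.1 ⟨0, hn⟩ ⟨a i, haz⟩ ≠ 0 := fun h0 => ha0 i (N.2.2 _ h0)
    rw [inv_mul_eq_iff_eq_mul₀ hN]
    -- Condition (iii) only covers `0 < i`; for `i = 0` the factor `N_0(a_0)` is `1`.
    rcases Nat.eq_zero_or_pos i with hi | hi
    · obtain rfl : i = ⟨0, hn⟩ := Fin.ext hi
      rw [N.2.1.2.2.2.1, one_mul]
    · exact N.2.1.2.2.2.2.2 ⟨0, hn⟩ i hi x x.2 _ haz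
  · refine Continuous.subtype_mk (continuous_pi fun i => continuous_pi fun x => ?_) _
    exact (((continuous_apply _).comp continuous_subtype_val).inv₀ fun h => hne h i).mul
      ((continuous_apply _).comp continuous_subtype_val)
  · refine Continuous.subtype_mk (continuous_pi fun x => ?_) _
    exact (continuous_apply _).comp ((continuous_apply _).comp continuous_subtype_val)
end

section
/- Let f : X → Y be a continuous surjective closed map of topological spaces such that the fiber f^{−1}({y}) is connected for every y ∈ Y. Then for every set A, the map from locally constant functions on Y with values in A to locally constant functions on X with values in A given by precomposition with f (g ↦ g ∘ f) is a bijection. -/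
/-- If `f : X → Y` is a continuous surjective closed map with connected fibers,
then precomposition with `f` is a bijection from locally constant functions on `Y` with
values in a set `A` to locally constant functions on `X` with values in `A`. -/
theorem locallyConstant_comp_bijective
    {X Y : Type*} [TopologicalSpace X] [TopologicalSpace Y]
    (f : X → Y) (hcont : Continuous f) (hsurj : Function.Surjective f)
    (hclosed : IsClosedMap f)
    (hfib : ∀ y : Y, IsConnected (f ⁻¹' {y}))
    (A : Type*) :
    Function.Bijective
      (fun g : {g : Y → A // IsLocallyConstant g} =>
        (⟨g.1 ∘ f, g.2.comp_continuous hcont⟩ : {g : X → A // IsLocallyConstant g})) := by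
  refine ⟨fun g h hgh => Subtype.ext (hsurj.injective_comp_right (congrArg Subtype.val hgh)), ?_⟩
  rintro ⟨g, hg⟩
  -- By connectedness of the fibers, `g` is constant on each fiber, so it descends to `Y`
  -- through any set-theoretic section of `f`.
  have hdesc : (g ∘ Function.surjInv hsurj) ∘ f = g := funext fun x =>
    hg.apply_eq_of_isPreconnected (hfib (f x)).isPreconnected
      (Function.surjInv_eq hsurj (f x)) rfl
  refine ⟨⟨g ∘ Function.surjInv hsurj, fun s => ?_⟩, Subtype.ext hdesc⟩
  -- A closed continuous surjection is a quotient map, so openness can be tested on `X`.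
  rw [← (hclosed.isQuotientMap hcont hsurj).isOpen_preimage, ← Set.preimage_comp, hdesc]
  exact hg s
end
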